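/- (Lemma 3.1, flat-boundary case, for which the curvature correction term C_q δ vanishes.) For every δ > 0 and every x ∈ Ω with s := c − x·n ∈ [0,δ], the coefficient Q_δ(x) satisfies 1/2 ≤ Q_δ(x) ≤ 3/2. -/

import Mathlib

/-! With `w = y - x` and `s = c - ⟪x, n⟫ > 0`, the integrand of `Q_δ` is
`J_δ(‖w‖) ((⟪w, n⟫ - s)² - s²) = J_δ(‖w‖) ⟪w, n⟫ (⟪w, n⟫ - 2 s)`, and the complement of `Ω` is
`⟪w, n⟫ ≥ s`. There `|⟪w, n⟫ - 2 s| ≤ ⟪w, n⟫`, so the integral is bounded in absolute value by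
the second moment of `J_δ` in the direction `n` over the cap `⟪w, n⟫ ≥ s`. By isotropy and the
normalization of `J`, the directional second moment over the whole plane is `1`
(`integral_moment`, `integral_Jd`), and by the symmetry `w ↦ -w` the cap carries at most half
of it (`setIntegral_moment_le`). -/

open MeasureTheory Real RealInnerProductSpace

noncomputable section

abbrev R2 : Type := EuclideanSpace ℝ (Fin 2)

/-- The rescaled kernel `J_δ(r) = δ⁻⁴ J(r/δ)`. -/
def Jd (J : ℝ → ℝ) (δ : ℝ) : ℝ → ℝ := fun r => (1 / δ ^ 4) * J (r / δ)

/-- Flat-interface boundary coefficient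
`Q_δ(x) = 1 − ∫_{ℝ²∖Ω} J_δ(|x−y|) [((y−x̄)·n)² − s²] dy`, where `Ω = {y·n < c}`,
`s = c − x·n` and `x̄ = x + s n`. -/
def Qd (J : ℝ → ℝ) (δ : ℝ) (n : R2) (c : ℝ) (x : R2) : ℝ :=
  1 - ∫ y in {y : R2 | c ≤ ⟪y, n⟫},
        Jd J δ ‖x - y‖ *
          (⟪y - (x + (c - ⟪x, n⟫) • n), n⟫ ^ 2 - (c - ⟪x, n⟫) ^ 2)

section Helpers

variable {K : ℝ → ℝ} {n : R2}

/-- `⟪z, n⟫² / ‖z‖²` is bounded by `1`, so the directional second moment inherits integrability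
from the full one; no separate measurability of `K` is needed. -/
lemma integrable_moment (hn : ‖n‖ = 1) (hint : Integrable (fun z : R2 => K ‖z‖ * ‖z‖ ^ 2)) :
    Integrable (fun z : R2 => K ‖z‖ * ⟪z, n⟫ ^ 2) := by
  have hfun : (fun z : R2 => K ‖z‖ * ⟪z, n⟫ ^ 2)
      = fun z : R2 => (K ‖z‖ * ‖z‖ ^ 2) * (⟪z, n⟫ ^ 2 / ‖z‖ ^ 2) := by
    funext z
    rcases eq_or_ne z 0 with rfl | hz
    · simp
    · have : ‖z‖ ≠ 0 := norm_ne_zero_iff.mpr hz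
      field_simp
  have hmeas : Measurable (fun z : R2 => ⟪z, n⟫ ^ 2 / ‖z‖ ^ 2) := by fun_prop
  rw [hfun]
  refine hint.mono (hint.aestronglyMeasurable.mul hmeas.aestronglyMeasurable) ?_
  refine Filter.Eventually.of_forall fun z => ?_
  rw [norm_mul]
  refine mul_le_of_le_one_right (norm_nonneg _) ?_
  rw [Real.norm_of_nonneg (by positivity)]
  refine div_le_one_of_le₀ ?_ (by positivity)
  have h := abs_real_inner_le_norm z n
  rw [hn, mul_one] at h
  exact sq_le_sq.mpr (by rwa [abs_norm])

/-- By rotation invariance, each direction carries half of the isotropic second moment. The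
symmetry used is the isometry exchanging the vectors of an orthonormal basis containing `n`. -/
lemma integral_moment (hn : ‖n‖ = 1) (hnorm : (∫ z : R2, K ‖z‖ * ‖z‖ ^ 2) = 2) :
    ∫ z : R2, K ‖z‖ * ⟪z, n⟫ ^ 2 = 1 := by
  have hint : Integrable (fun z : R2 => K ‖z‖ * ‖z‖ ^ 2) :=
    .of_integral_ne_zero (by rw [hnorm]; norm_num)
  obtain ⟨b, hb⟩ : ∃ b : OrthonormalBasis (Fin 2) ℝ R2, ∀ i ∈ ({0} : Set (Fin 2)), b i = n := by
    refine Orthonormal.exists_orthonormalBasis_extension_of_card_eq (v := fun _ => n)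
      (by simp) ?_
    refine ⟨fun _ => hn, fun i j hij => ?_⟩
    exact absurd (Subsingleton.elim i j) hij
  have hb0 : b 0 = n := hb 0 rfl
  let e : R2 ≃ₗᵢ[ℝ] R2 := b.equiv b (Equiv.swap 0 1)
  have he : e (b 1) = n := by simp [e, hb0]
  have hswap : ∫ z : R2, K ‖z‖ * ⟪z, n⟫ ^ 2 = ∫ z : R2, K ‖z‖ * ⟪z, b 1⟫ ^ 2 := by
    rw [← e.measurePreserving.integral_comp e.toHomeomorph.measurableEmbedding]
    congr 1
    funext z
    rw [e.norm_map, ← he, e.inner_map_map]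
  have hsum : (∫ z : R2, K ‖z‖ * ⟪z, n⟫ ^ 2) + ∫ z : R2, K ‖z‖ * ⟪z, b 1⟫ ^ 2 = 2 := by
    rw [← integral_add (integrable_moment hn hint) (integrable_moment (b.norm_eq_one 1) hint),
      ← hnorm]
    congr 1
    funext z
    have := b.sum_sq_inner_left z
    rw [Fin.sum_univ_two, hb0] at this
    rw [← this]
    ring
  linarith

/-- The caps `{s ≤ ⟪z, n⟫}` and `{s ≤ -⟪z, n⟫}` are disjoint and exchanged by `z ↦ -z`, so each
carries at most half of the directional second moment. -/
lemma setIntegral_moment_le (hK : ∀ r, 0 ≤ K r) (hn : ‖n‖ = 1)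
    (hnorm : (∫ z : R2, K ‖z‖ * ‖z‖ ^ 2) = 2) {s : ℝ} (hs : 0 < s) :
    ∫ z in {z : R2 | s ≤ ⟪z, n⟫}, K ‖z‖ * ⟪z, n⟫ ^ 2 ≤ 1 / 2 := by
  have hint := integrable_moment hn
    (.of_integral_ne_zero (by rw [hnorm]; norm_num) : Integrable fun z : R2 => K ‖z‖ * ‖z‖ ^ 2)
  have hA : MeasurableSet {z : R2 | s ≤ ⟪z, n⟫} := measurableSet_le (by fun_prop) (by fun_prop)
  have hB : MeasurableSet {z : R2 | s ≤ -⟪z, n⟫} := measurableSet_le (by fun_prop) (by fun_prop)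
  have hAB : Disjoint {z : R2 | s ≤ ⟪z, n⟫} {z : R2 | s ≤ -⟪z, n⟫} := by
    rw [Set.disjoint_left]
    intro z h1 h2
    simp only [Set.mem_ofPred_eq] at h1 h2
    linarith
  have hsymm : ∫ z in {z : R2 | s ≤ -⟪z, n⟫}, K ‖z‖ * ⟪z, n⟫ ^ 2
      = ∫ z in {z : R2 | s ≤ ⟪z, n⟫}, K ‖z‖ * ⟪z, n⟫ ^ 2 := by
    rw [← integral_indicator hA, ← integral_indicator hB, ← integral_neg_eq_self]
    congr 1
    funext z
    simp [Set.indicator]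
  have hunion := setIntegral_union hAB hB hint.integrableOn hint.integrableOn
  have hle : ∫ z in {z : R2 | s ≤ ⟪z, n⟫} ∪ {z : R2 | s ≤ -⟪z, n⟫}, K ‖z‖ * ⟪z, n⟫ ^ 2
      ≤ ∫ z : R2, K ‖z‖ * ⟪z, n⟫ ^ 2 :=
    setIntegral_le_integral hint
      (Filter.Eventually.of_forall fun z => mul_nonneg (hK _) (sq_nonneg _))
  rw [integral_moment hn hnorm] at hle
  linarith

/-- The exponent in `δ⁻⁴` makes the second moment in dimension two scale invariant. -/
lemma integral_Jd {J : ℝ → ℝ} {δ : ℝ} (hδ : 0 < δ)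
    (hJ : (∫ z : R2, J ‖z‖ * ‖z‖ ^ 2) = 2) :
    (∫ z : R2, Jd J δ ‖z‖ * ‖z‖ ^ 2) = 2 := by
  have h := Measure.integral_comp_smul (volume : Measure R2)
    (fun z : R2 => J ‖z‖ * ‖z‖ ^ 2) δ⁻¹
  have hfun : (fun z : R2 => Jd J δ ‖z‖ * ‖z‖ ^ 2)
      = fun z : R2 => (δ ^ 2)⁻¹ * (J ‖δ⁻¹ • z‖ * ‖δ⁻¹ • z‖ ^ 2) := by
    funext z
    rw [norm_smul, Real.norm_of_nonneg (inv_nonneg.mpr hδ.le), Jd, inv_mul_eq_div]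
    field_simp
  rw [hfun, integral_const_mul, h, hJ]
  simp only [finrank_euclideanSpace, Fintype.card_fin, smul_eq_mul]
  rw [abs_of_nonneg (by positivity)]
  field_simp

end Helpers

/-- Lemma 3.1, flat-boundary case: for `x` in the half-plane
`Ω = {y·n < c}` with `s = c − x·n ∈ [0,δ]`, one has `1/2 ≤ Q_δ(x) ≤ 3/2`. -/
theorem statement4
    (J : ℝ → ℝ)
    (hJ_nonneg : ∀ r, 0 ≤ J r)
    (hJ_supp : ∀ r : ℝ, 1 < r → J r = 0)
    (hJ_mono : AntitoneOn J (Set.Ici 0))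
    (hJ_pos : ∀ r ∈ Set.Icc (0:ℝ) 1, 0 < J r)
    (hJ_int : Integrable (fun z : R2 => J ‖z‖))
    (hJ_norm : (∫ z : R2, J ‖z‖ * ‖z‖ ^ 2) = 2)
    (n : R2) (hn : ‖n‖ = 1) (c : ℝ)
    (δ : ℝ) (hδ : 0 < δ)
    (x : R2) (hxΩ : ⟪x, n⟫ < c) (hs : c - ⟪x, n⟫ ≤ δ) :
    1/2 ≤ Qd J δ n c x ∧ Qd J δ n c x ≤ 3/2 := by
  have hK : ∀ r, 0 ≤ Jd J δ r := fun r => mul_nonneg (by positivity) (hJ_nonneg _)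
  have hnorm := integral_Jd hδ hJ_norm
  have hs0 : 0 < c - ⟪x, n⟫ := by linarith
  have hbound := setIntegral_moment_le hK hn hnorm hs0
  have hint := integrable_moment hn
    (.of_integral_ne_zero (by rw [hnorm]; norm_num) :
      Integrable fun z : R2 => Jd J δ ‖z‖ * ‖z‖ ^ 2)
  have hA : MeasurableSet {z : R2 | c - ⟪x, n⟫ ≤ ⟪z, n⟫} :=
    measurableSet_le (by fun_prop) (by fun_prop)
  have hB : MeasurableSet {y : R2 | c ≤ ⟪y, n⟫} := measurableSet_le (by fun_prop) (by fun_prop)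
  have hnn : ⟪n, n⟫ = (1 : ℝ) := by rw [real_inner_self_eq_norm_sq, hn]; norm_num
  have hshift : ∫ y in {y : R2 | c ≤ ⟪y, n⟫}, Jd J δ ‖x - y‖ *
        (⟪y - (x + (c - ⟪x, n⟫) • n), n⟫ ^ 2 - (c - ⟪x, n⟫) ^ 2)
      = ∫ w in {w : R2 | c - ⟪x, n⟫ ≤ ⟪w, n⟫}, Jd J δ ‖w‖ *
        ((⟪w, n⟫ - (c - ⟪x, n⟫)) ^ 2 - (c - ⟪x, n⟫) ^ 2) := by
    rw [← integral_indicator hA, ← integral_indicator hB, ← integral_add_left_eq_self _ x]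
    congr 1
    funext w
    have h1 : x - (x + w) = -w := by abel
    have h2 : x + w - (x + (c - ⟪x, n⟫) • n) = w - (c - ⟪x, n⟫) • n := by abel
    simp only [Set.indicator, Set.mem_ofPred_eq, h1, h2, norm_neg, inner_add_left, inner_sub_left,
      real_inner_smul_left, hnn, mul_one, sub_le_iff_le_add']
  have habs : ‖∫ w in {w : R2 | c - ⟪x, n⟫ ≤ ⟪w, n⟫}, Jd J δ ‖w‖ *
        ((⟪w, n⟫ - (c - ⟪x, n⟫)) ^ 2 - (c - ⟪x, n⟫) ^ 2)‖
      ≤ ∫ w in {w : R2 | c - ⟪x, n⟫ ≤ ⟪w, n⟫}, Jd J δ ‖w‖ * ⟪w, n⟫ ^ 2 := by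
    refine norm_integral_le_of_norm_le hint.integrableOn ?_
    refine (ae_restrict_iff' hA).mpr (Filter.Eventually.of_forall fun w hw => ?_)
    rw [norm_mul, Real.norm_of_nonneg (hK _)]
    refine mul_le_mul_of_nonneg_left ?_ (hK _)
    rw [Set.mem_ofPred_eq] at hw
    rw [Real.norm_eq_abs, abs_le]
    constructor <;> nlinarith
  have h := abs_le.mp (habs.trans hbound)
  rw [Qd, hshift]
  constructor <;> linarith [h.1, h.2]
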